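/- Under Assumption (A), let K ⊆ Γ_∞ be a compact subset. (i) If f_∞ ≡ +∞ on Γ_∞, then for every B > 0 there exists R₀ > 0 such that for every λ ∈ K and every λ̃ in the closed positive orthant Γ̄ₙ with |λ̃| ≥ R₀, one has λ + λ̃ ∈ Γ and f(λ + λ̃) ≥ B. (ii) If f_∞ is finite at every point of Γ_∞, then for every ε > 0 there exists R₀ > 0 such that for every λ ∈ K and every λ̃ ∈ Γ̄ₙ with |λ̃| ≥ R₀, one has λ + λ̃ ∈ Γ and f(λ + λ̃) ≥ f_∞(λ) − ε. -/

import Mathlib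

open Filter

/-- Assumption (A) from the paper: `Γ ⊆ ℝⁿ` is an open convex symmetric cone with
`Γₙ ⊆ Γ ⊆ Γ₁`, and `f : Γ → (0,∞)` is smooth, symmetric, concave, with positive partial
derivatives, vanishing at the boundary of `Γ`, and `f(Rλ) → +∞` as `R → +∞`. -/
structure AssumptionA (n : ℕ) (Γ : Set (Fin n → ℝ)) (f : (Fin n → ℝ) → ℝ) : Prop where
  isOpen : IsOpen Γ
  convex : Convex ℝ Γ
  cone : ∀ x ∈ Γ, ∀ t : ℝ, 0 < t → t • x ∈ Γ
  perm_invariant : ∀ x ∈ Γ, ∀ σ : Equiv.Perm (Fin n), (fun i => x (σ i)) ∈ Γ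
  orthant_subset : {x : Fin n → ℝ | ∀ i, 0 < x i} ⊆ Γ
  subset_halfspace : Γ ⊆ {x : Fin n → ℝ | 0 < ∑ i, x i}
  f_pos : ∀ x ∈ Γ, 0 < f x
  f_smooth : ContDiffOn ℝ (⊤ : ℕ∞) f Γ
  f_perm_invariant : ∀ x ∈ Γ, ∀ σ : Equiv.Perm (Fin n), f (fun i => x (σ i)) = f x
  f_concave : ConcaveOn ℝ Γ f
  f_deriv_pos : ∀ x ∈ Γ, ∀ i : Fin n, 0 < fderiv ℝ f x (Pi.single i 1)
  f_boundary_zero : ∀ x₀ ∈ frontier Γ, Tendsto f (nhdsWithin x₀ Γ) (nhds 0)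
  f_proper : ∀ x ∈ Γ, Tendsto (fun R : ℝ => f (R • x)) atTop atTop

/-- `Γ_∞`: the set of `λ ∈ ℝⁿ` such that for every `i`, replacing the `i`-th coordinate by any
sufficiently large `R` lands in `Γ`. -/
def GammaInfty (n : ℕ) (Γ : Set (Fin n → ℝ)) : Set (Fin n → ℝ) :=
  {x | ∀ i : Fin n, ∃ R₀ : ℝ, ∀ R ≥ R₀, Function.update x i R ∈ Γ}

/-- `f_{∞,i}(λ) = lim_{R→+∞} f(λ₁,…,λ_{i−1},R,λ_{i+1},…,λₙ)`, realized as a limsup in `EReal`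
(the limit exists in `(0,+∞]` since `f` is increasing in `λᵢ`). -/
noncomputable def fInftyi (n : ℕ) (f : (Fin n → ℝ) → ℝ) (i : Fin n) (x : Fin n → ℝ) : EReal :=
  Filter.limsup (fun R : ℝ => ((f (Function.update x i R) : ℝ) : EReal)) Filter.atTop

/-- `f_∞(λ) = min_{1 ≤ i ≤ n} f_{∞,i}(λ)`, with values in `(0,+∞]`. -/
noncomputable def fInfty (n : ℕ) (f : (Fin n → ℝ) → ℝ) (x : Fin n → ℝ) : EReal :=
  ⨅ i : Fin n, fInftyi n f i x

/-!
Coordinatewise monotonicity turns everything into statements about open upper sets: if `U` is open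
and upper and `x₀ ∈ GammaInfty n U`, then `x + y ∈ U` for `x` near `x₀` and `y ≥ 0` large, because
`y` has a large coordinate. Applied to the superlevel sets of `f`, this bounds `f (x + y)` below by
any `c < f_∞(x₀)`, locally uniformly in `x`, and compactness of `K` makes the bound uniform. On the
open convex set `Γ_∞`, `f_∞` inherits concavity from `f`; hence it is finite everywhere as soon as
it is finite at one point, and is then continuous, so `f_∞(x₀)` may be exchanged for `f_∞(x)`.
-/

open Topology Bornology

section ConcaveMonotone

variable {E : Type*} [AddCommGroup E] [PartialOrder E] [IsOrderedAddMonoid E] [Module ℝ E]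
  [PosSMulMono ℝ E] {s : Set E} {f : E → ℝ}

lemma monotoneOn_of_concaveOn_of_bddBelow (hs : IsUpperSet s) (hf : ConcaveOn ℝ s f)
    (hbdd : BddBelow (f '' s)) : MonotoneOn f s := by
  intro x hx y _ hxy
  obtain ⟨m, hm⟩ := hbdd
  have chord_le : ∀ t ∈ Set.Ioo (0 : ℝ) 1, (1 - t) * f x + t * m ≤ f y := by
    rintro t ⟨ht0, ht1⟩
    have hz : x + t⁻¹ • (y - x) ∈ s :=
      hs (le_add_of_nonneg_right (smul_nonneg (by positivity) (sub_nonneg.2 hxy))) hx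
    calc (1 - t) * f x + t * m
        ≤ (1 - t) * f x + t * f (x + t⁻¹ • (y - x)) := by
          gcongr
          exact hm (Set.mem_image_of_mem f hz)
      _ ≤ f ((1 - t) • x + t • (x + t⁻¹ • (y - x))) :=
          hf.2 hx hz (sub_nonneg.2 ht1.le) ht0.le (sub_add_cancel 1 t)
      _ = f y := by
          congr 1
          rw [smul_add, smul_inv_smul₀ ht0.ne', ← add_assoc, ← add_smul, sub_add_cancel, one_smul,
            add_sub_cancel]
  have hlim : Tendsto (fun t : ℝ => (1 - t) * f x + t * m) (𝓝[>] 0) (𝓝 (f x)) := by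
    have hcont : Continuous fun t : ℝ => (1 - t) * f x + t * m := by fun_prop
    simpa using (hcont.tendsto 0).mono_left nhdsWithin_le_nhds
  exact le_of_tendsto hlim (eventually_of_mem (Ioo_mem_nhdsGT one_pos) chord_le)

end ConcaveMonotone

section UpperSet

lemma isUpperSet_of_isOpen_of_add_mem {ι : Type*} {U : Set (ι → ℝ)} (hopen : IsOpen U)
    (hadd : ∀ x ∈ U, ∀ y ∈ U, x + y ∈ U) (horthant : {x : ι → ℝ | ∀ i, 0 < x i} ⊆ U) :
    IsUpperSet U := by
  intro x y hxy hx
  have hlim : Tendsto (fun δ : ℝ => x - fun _ => δ) (𝓝[>] 0) (𝓝 x) := by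
    have hcont : Continuous fun δ : ℝ => x - fun _ => δ := by fun_prop
    have h0 := hcont.tendsto 0
    rw [show (x - fun _ => (0 : ℝ)) = x from sub_zero x] at h0
    exact h0.mono_left nhdsWithin_le_nhds
  obtain ⟨δ, hxδ, hδ⟩ :=
    ((hlim.eventually (hopen.mem_nhds hx)).and self_mem_nhdsWithin).exists
  have hyδ : (y - x + fun _ => δ) ∈ U :=
    horthant fun i => add_pos_of_nonneg_of_pos (sub_nonneg.2 (hxy i)) hδ
  convert hadd _ hxδ _ hyδ using 1
  abel

lemma isUpperSet_setOf_lt {α β : Type*} [Preorder α] [Preorder β] {s : Set α} {f : α → β}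
    (hs : IsUpperSet s) (hf : MonotoneOn f s) (c : β) : IsUpperSet {x ∈ s | c < f x} :=
  fun _ _ hxy hx => ⟨hs hxy hx.1, hx.2.trans_le (hf hx.1 (hs hxy hx.1) hxy)⟩

end UpperSet

section NonnegativeVectors

lemma eventually_exists_le_of_nonneg {ι : Type*} [Finite ι] (s : ι → ℝ) :
    ∀ᶠ y in cobounded (ι → ℝ) ⊓ 𝓟 (Set.Ici 0), ∃ i, s i ≤ y i := by
  cases nonempty_fintype ι
  rw [eventually_inf_principal]
  filter_upwards [eventually_cobounded_le_norm (‖s‖ + 1)] with y hy hy0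
  by_contra! hlt
  have hlt_norm : ‖y‖ < ‖s‖ + 1 := by
    refine (pi_norm_lt_iff (by positivity)).2 fun i => ?_
    rw [Real.norm_of_nonneg (hy0 i)]
    linarith [hlt i, Real.le_norm_self (s i), norm_le_pi_norm s i]
  exact hlt_norm.not_ge hy

variable {ι : Type*} [Fintype ι]

lemma exists_forall_of_eventually_cobounded {p : (ι → ℝ) → Prop}
    (h : ∀ᶠ y in cobounded (ι → ℝ), p y) :
    ∃ R : ℝ, 0 < R ∧ ∀ y, R ≤ √(∑ i, y i ^ 2) → p y := by
  have hE : ∀ᶠ v in cobounded (EuclideanSpace ℝ ι), p (WithLp.ofLp v) :=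
    (PiLp.antilipschitzWith_ofLp 2 fun _ : ι => ℝ).tendsto_cobounded.eventually h
  obtain ⟨R, -, hR⟩ := hasBasis_cobounded_norm.eventually_iff.1 hE
  refine ⟨max R 1, by positivity, fun y hy => hR (x := WithLp.toLp 2 y) ?_⟩
  simpa [EuclideanSpace.norm_eq] using (le_max_left R 1).trans hy

lemma exists_radius_of_eventually {K : Set (ι → ℝ)} (hK : IsCompact K)
    {p : (ι → ℝ) → (ι → ℝ) → Prop}
    (h : ∀ x₀ ∈ K, ∀ᶠ z in (cobounded (ι → ℝ) ⊓ 𝓟 (Set.Ici 0)) ×ˢ 𝓝 x₀, p z.2 z.1) :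
    ∃ R : ℝ, 0 < R ∧ ∀ x ∈ K, ∀ y : ι → ℝ, (∀ i, 0 ≤ y i) → R ≤ √(∑ i, y i ^ 2) → p x y := by
  have hunif : ∀ᶠ y in cobounded (ι → ℝ) ⊓ 𝓟 (Set.Ici 0), ∀ x ∈ K, p x y :=
    (Eventually.curry (hK.mem_prod_nhdsSet_of_forall h)).mono fun _ hy => hy.self_of_nhdsSet
  obtain ⟨R, hR, hp⟩ :=
    exists_forall_of_eventually_cobounded (eventually_inf_principal.1 hunif)
  exact ⟨R, hR, fun x hx y hy0 hyR => hp y hyR hy0 x hx⟩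

end NonnegativeVectors

section GammaInfty

variable {n : ℕ} {U : Set (Fin n → ℝ)}

lemma mem_gammaInfty_iff (hU : IsUpperSet U) {x : Fin n → ℝ} :
    x ∈ GammaInfty n U ↔ ∀ i, ∃ R, Function.update x i R ∈ U :=
  forall_congr' fun _ => ⟨fun ⟨R, hR⟩ => ⟨R, hR R le_rfl⟩,
    fun ⟨R, hR⟩ => ⟨R, fun _ hS => hU (Function.update_mono hS) hR⟩⟩

lemma isOpen_gammaInfty (hopen : IsOpen U) (hU : IsUpperSet U) : IsOpen (GammaInfty n U) := by
  have hinter : GammaInfty n U = ⋂ i, ⋃ R, (Function.update · i R) ⁻¹' U :=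
    Set.ext fun x => by simp [mem_gammaInfty_iff hU]
  rw [hinter]
  exact isOpen_iInter_of_finite fun i => isOpen_iUnion fun R =>
    hopen.preimage (continuous_id.update i continuous_const)

lemma update_smul_add_smul {ι 𝕜 : Type*} [DecidableEq ι] [Semiring 𝕜] (x y : ι → 𝕜) (i : ι)
    (a b r s : 𝕜) :
    Function.update (a • x + b • y) i (a * r + b * s) =
      a • Function.update x i r + b • Function.update y i s := by
  rw [← Function.update_smul, ← Function.update_smul, ← Function.update_add, smul_eq_mul,
    smul_eq_mul]

lemma convex_gammaInfty (hconv : Convex ℝ U) (hU : IsUpperSet U) :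
    Convex ℝ (GammaInfty n U) := by
  intro x hx y hy a b ha hb hab
  rw [mem_gammaInfty_iff hU] at hx hy ⊢
  intro i
  obtain ⟨r, hr⟩ := hx i
  obtain ⟨s, hs⟩ := hy i
  exact ⟨a * r + b * s, update_smul_add_smul x y i a b r s ▸ hconv hr hs ha hb hab⟩

lemma eventually_add_mem_of_mem_gammaInfty (hopen : IsOpen U) (hU : IsUpperSet U)
    {x₀ : Fin n → ℝ} (hx₀ : x₀ ∈ GammaInfty n U) :
    ∀ᶠ z in (cobounded (Fin n → ℝ) ⊓ 𝓟 (Set.Ici 0)) ×ˢ 𝓝 x₀, z.2 + z.1 ∈ U := by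
  choose R hR using (mem_gammaInfty_iff hU).1 hx₀
  have hnear : ∀ᶠ x in 𝓝 x₀, ∀ i, x + Pi.single i (R i - x₀ i) ∈ U := by
    refine eventually_all.2 fun i => ?_
    have hcont : Continuous fun x : Fin n → ℝ => x + Pi.single i (R i - x₀ i) := by fun_prop
    refine hcont.continuousAt.eventually (hopen.mem_nhds ?_)
    convert hR i using 1
    ext j
    obtain rfl | hji := eq_or_ne j i <;> simp [*]
  have hfar : ∀ᶠ y in cobounded (Fin n → ℝ) ⊓ 𝓟 (Set.Ici 0),
      0 ≤ y ∧ ∃ i, R i - x₀ i ≤ y i :=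
    (eventually_inf_principal.2 (Eventually.of_forall fun _ hy => hy)).and
      (eventually_exists_le_of_nonneg fun i => R i - x₀ i)
  filter_upwards [hfar.prod_mk hnear] with ⟨y, x⟩ ⟨⟨hy0, i, hi⟩, hx⟩
  have hsingle : Pi.single i (R i - x₀ i) ≤ y := update_le_iff.2 ⟨hi, fun j _ => hy0 j⟩
  exact hU (by gcongr) (hx i)

end GammaInfty

section FInfty

variable {n : ℕ} {Γ : Set (Fin n → ℝ)} {f : (Fin n → ℝ) → ℝ} {x : Fin n → ℝ}

lemma exists_lt_update_of_lt_fInftyi (hx : x ∈ GammaInfty n Γ) {i : Fin n} {c : ℝ}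
    (hc : (c : EReal) < fInftyi n f i x) :
    ∃ R, Function.update x i R ∈ Γ ∧ c < f (Function.update x i R) := by
  obtain ⟨R₀, hR₀⟩ := hx i
  obtain ⟨R, hcR, hR⟩ :=
    ((frequently_lt_of_lt_limsup (by isBoundedDefault) hc).and_eventually
      (eventually_ge_atTop R₀)).exists
  exact ⟨R, hR₀ R hR, EReal.coe_lt_coe_iff.1 hcR⟩

lemma le_fInftyi (hΓ : IsUpperSet Γ) (hf : MonotoneOn f Γ) {i : Fin n} {R : ℝ}
    (hR : Function.update x i R ∈ Γ) : (f (Function.update x i R) : EReal) ≤ fInftyi n f i x := by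
  refine le_limsup_of_frequently_le (Eventually.frequently ?_) (by isBoundedDefault)
  filter_upwards [eventually_ge_atTop R] with S hS
  have hRS : Function.update x i R ≤ Function.update x i S := Function.update_mono hS
  exact EReal.coe_le_coe (hf hR (hΓ hRS hR) hRS)

lemma bot_lt_fInfty (hΓ : IsUpperSet Γ) (hf : MonotoneOn f Γ) (hx : x ∈ GammaInfty n Γ) :
    ⊥ < fInfty n f x := by
  choose R hR using (mem_gammaInfty_iff hΓ).1 hx
  obtain ⟨m, hm⟩ := Finite.exists_ge fun i => f (Function.update x i (R i))
  exact (EReal.bot_lt_coe m).trans_le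
    (le_iInf fun i => (EReal.coe_le_coe (hm i)).trans (le_fInftyi hΓ hf (hR i)))

lemma mem_gammaInfty_setOf_lt (hΓ : IsUpperSet Γ) (hf : MonotoneOn f Γ)
    (hx : x ∈ GammaInfty n Γ) {c : ℝ} (hc : (c : EReal) < fInfty n f x) :
    x ∈ GammaInfty n {v ∈ Γ | c < f v} :=
  (mem_gammaInfty_iff (isUpperSet_setOf_lt hΓ hf c)).2 fun i =>
    exists_lt_update_of_lt_fInftyi hx (hc.trans_le (iInf_le _ i))

lemma coe_add_le_fInfty_of_lt (hΓ : IsUpperSet Γ) (hf : MonotoneOn f Γ) (hconc : ConcaveOn ℝ Γ f)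
    {y : Fin n → ℝ} (hx : x ∈ GammaInfty n Γ) (hy : y ∈ GammaInfty n Γ) {a b c d : ℝ}
    (ha : 0 ≤ a) (hb : 0 ≤ b) (hab : a + b = 1) (hc : (c : EReal) < fInfty n f x)
    (hd : (d : EReal) < fInfty n f y) :
    ((a * c + b * d : ℝ) : EReal) ≤ fInfty n f (a • x + b • y) := by
  refine le_iInf fun i => ?_
  obtain ⟨r, hr, hcr⟩ := exists_lt_update_of_lt_fInftyi hx (hc.trans_le (iInf_le _ i))
  obtain ⟨s, hs, hds⟩ := exists_lt_update_of_lt_fInftyi hy (hd.trans_le (iInf_le _ i))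
  have hupdate := update_smul_add_smul x y i a b r s
  have hmem : Function.update (a • x + b • y) i (a * r + b * s) ∈ Γ :=
    hupdate ▸ hconc.1 hr hs ha hb hab
  refine le_trans (EReal.coe_le_coe ?_) (le_fInftyi hΓ hf hmem)
  calc a * c + b * d
      ≤ a * f (Function.update x i r) + b * f (Function.update y i s) := by gcongr
    _ ≤ f (a • Function.update x i r + b • Function.update y i s) := hconc.2 hr hs ha hb hab
    _ = f (Function.update (a • x + b • y) i (a * r + b * s)) := by rw [hupdate]

lemma fInfty_ne_top_of_ne_top (hopen : IsOpen Γ) (hΓ : IsUpperSet Γ) (hf : MonotoneOn f Γ)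
    (hconc : ConcaveOn ℝ Γ f) {y : Fin n → ℝ} (hx : x ∈ GammaInfty n Γ)
    (hy : y ∈ GammaInfty n Γ) (hxtop : fInfty n f x ≠ ⊤) : fInfty n f y ≠ ⊤ := by
  intro hytop
  have hlim : Tendsto (fun t : ℝ => x + t • (x - y)) (𝓝[>] 0) (𝓝 x) := by
    have hcont : Continuous fun t : ℝ => x + t • (x - y) := by fun_prop
    simpa using (hcont.tendsto 0).mono_left nhdsWithin_le_nhds
  obtain ⟨t, hw, ht⟩ := ((hlim.eventually ((isOpen_gammaInfty hopen hΓ).mem_nhds hx)).and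
    self_mem_nhdsWithin).exists
  replace ht : 0 < t := ht
  obtain ⟨d, -, hd⟩ := EReal.exists_between_coe_real (bot_lt_fInfty hΓ hf hw)
  have hcomb : (t / (1 + t)) • y + (1 / (1 + t)) • (x + t • (x - y)) = x := by
    ext j
    simp only [Pi.add_apply, Pi.smul_apply, Pi.sub_apply, smul_eq_mul]
    field_simp
    ring
  refine hxtop ((EReal.eq_top_iff_forall_lt _).2 fun e => ?_)
  -- The value making the convex combination of `c` and `d` equal to `e + 1`.
  set c : ℝ := (e + 1 - 1 / (1 + t) * d) / (t / (1 + t))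
  have hle := coe_add_le_fInfty_of_lt hΓ hf hconc hy hw (a := t / (1 + t)) (b := 1 / (1 + t))
    (by positivity) (by positivity) (by field_simp; ring) (hytop ▸ EReal.coe_lt_top c) hd
  rw [hcomb, mul_div_cancel₀ _ (by positivity), sub_add_cancel] at hle
  exact (EReal.coe_lt_coe (lt_add_one e)).trans_le hle

lemma concaveOn_toReal_fInfty (hΓ : IsUpperSet Γ) (hf : MonotoneOn f Γ) (hconc : ConcaveOn ℝ Γ f)
    (hfin : ∀ x ∈ GammaInfty n Γ, fInfty n f x ≠ ⊤) :
    ConcaveOn ℝ (GammaInfty n Γ) fun x => (fInfty n f x).toReal := by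
  have hcoe : ∀ x ∈ GammaInfty n Γ, ((fInfty n f x).toReal : EReal) = fInfty n f x :=
    fun x hx => EReal.coe_toReal (hfin x hx) (bot_lt_fInfty hΓ hf hx).ne'
  have hconv := convex_gammaInfty hconc.1 hΓ
  refine ⟨hconv, fun x hx y hy a b ha hb hab => ?_⟩
  refine le_of_forall_pos_sub_le fun δ hδ => ?_
  have hlt : ∀ w ∈ GammaInfty n Γ, (((fInfty n f w).toReal - δ : ℝ) : EReal) < fInfty n f w :=
    fun w hw => (EReal.coe_lt_coe (sub_lt_self _ hδ)).trans_eq (hcoe w hw)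
  have hle := coe_add_le_fInfty_of_lt hΓ hf hconc hx hy ha hb hab (hlt x hx) (hlt y hy)
  rw [← hcoe _ (hconv hx hy ha hb hab), EReal.coe_le_coe_iff] at hle
  simp only [smul_eq_mul]
  linear_combination hle + δ * hab

lemma continuousOn_toReal_fInfty (hopen : IsOpen Γ) (hΓ : IsUpperSet Γ) (hf : MonotoneOn f Γ)
    (hconc : ConcaveOn ℝ Γ f) (hfin : ∀ x ∈ GammaInfty n Γ, fInfty n f x ≠ ⊤) :
    ContinuousOn (fun x => (fInfty n f x).toReal) (GammaInfty n Γ) :=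
  (concaveOn_toReal_fInfty hΓ hf hconc hfin).continuousOn (isOpen_gammaInfty hopen hΓ)

lemma eventually_lt_of_lt_fInfty (hopen : IsOpen Γ) (hΓ : IsUpperSet Γ) (hf : MonotoneOn f Γ)
    (hcont : ContinuousOn f Γ) (hx : x ∈ GammaInfty n Γ) {c : ℝ}
    (hc : (c : EReal) < fInfty n f x) :
    ∀ᶠ z in (cobounded (Fin n → ℝ) ⊓ 𝓟 (Set.Ici 0)) ×ˢ 𝓝 x, z.2 + z.1 ∈ Γ ∧ c < f (z.2 + z.1) :=
  eventually_add_mem_of_mem_gammaInfty (hcont.isOpen_inter_preimage hopen isOpen_Ioi)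
    (isUpperSet_setOf_lt hΓ hf c) (mem_gammaInfty_setOf_lt hΓ hf hx hc)

lemma eventually_toReal_fInfty_sub_le (hopen : IsOpen Γ) (hΓ : IsUpperSet Γ)
    (hf : MonotoneOn f Γ) (hconc : ConcaveOn ℝ Γ f)
    (hx : x ∈ GammaInfty n Γ) (hfin : fInfty n f x ≠ ⊤) {ε : ℝ} (hε : 0 < ε) :
    ∀ᶠ z in (cobounded (Fin n → ℝ) ⊓ 𝓟 (Set.Ici 0)) ×ˢ 𝓝 x,
      z.2 + z.1 ∈ Γ ∧ (fInfty n f z.2).toReal - ε ≤ f (z.2 + z.1) := by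
  set φ : (Fin n → ℝ) → ℝ := fun w => (fInfty n f w).toReal
  have hlt : ((φ x - ε / 2 : ℝ) : EReal) < fInfty n f x :=
    (EReal.coe_lt_coe (sub_lt_self _ (half_pos hε))).trans_eq
      (EReal.coe_toReal hfin (bot_lt_fInfty hΓ hf hx).ne')
  have hφ : ContinuousAt φ x := (continuousOn_toReal_fInfty hopen hΓ hf hconc fun y hy =>
    fInfty_ne_top_of_ne_top hopen hΓ hf hconc hx hy hfin).continuousAt
    ((isOpen_gammaInfty hopen hΓ).mem_nhds hx)
  have hnear : ∀ᶠ w in 𝓝 x, φ w < φ x + ε / 2 :=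
    hφ.eventually_lt_const (lt_add_of_pos_right _ (half_pos hε))
  filter_upwards [eventually_lt_of_lt_fInfty hopen hΓ hf (hconc.continuousOn hopen) hx hlt,
    tendsto_snd.eventually hnear] with z hz hzx
  exact ⟨hz.1, by linarith [hz.2]⟩

end FInfty

namespace AssumptionA

variable {n : ℕ} {Γ : Set (Fin n → ℝ)} {f : (Fin n → ℝ) → ℝ}

lemma add_mem (hA : AssumptionA n Γ f) {x y : Fin n → ℝ} (hx : x ∈ Γ) (hy : y ∈ Γ) :
    x + y ∈ Γ := by
  have hmid : (2 : ℝ)⁻¹ • x + (2 : ℝ)⁻¹ • y ∈ Γ :=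
    hA.convex hx hy (by norm_num) (by norm_num) (by norm_num)
  have hdouble := hA.cone _ hmid 2 two_pos
  rwa [← smul_add, smul_inv_smul₀ two_ne_zero] at hdouble

lemma isUpperSet (hA : AssumptionA n Γ f) : IsUpperSet Γ :=
  isUpperSet_of_isOpen_of_add_mem hA.isOpen (fun _ hx _ hy => hA.add_mem hx hy) hA.orthant_subset

lemma monotoneOn (hA : AssumptionA n Γ f) : MonotoneOn f Γ :=
  monotoneOn_of_concaveOn_of_bddBelow hA.isUpperSet hA.f_concave
    ⟨0, Set.forall_mem_image.2 fun x hx => (hA.f_pos x hx).le⟩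

end AssumptionA

theorem stmt_6_general {n : ℕ} {Γ : Set (Fin n → ℝ)} {f : (Fin n → ℝ) → ℝ} (hopen : IsOpen Γ)
    (hΓ : IsUpperSet Γ) (hf : MonotoneOn f Γ) (hconc : ConcaveOn ℝ Γ f)
    {K : Set (Fin n → ℝ)} (hKsub : K ⊆ GammaInfty n Γ) (hK : IsCompact K) :
    ((∀ x ∈ K, fInfty n f x = ⊤) →
      ∀ B : ℝ, ∃ R₀ : ℝ, 0 < R₀ ∧
        ∀ x ∈ K, ∀ y : Fin n → ℝ, (∀ i, 0 ≤ y i) →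
          R₀ ≤ Real.sqrt (∑ i, y i ^ 2) → x + y ∈ Γ ∧ B ≤ f (x + y)) ∧
    ((∀ x ∈ K, fInfty n f x ≠ ⊤) →
      ∀ ε : ℝ, 0 < ε → ∃ R₀ : ℝ, 0 < R₀ ∧
        ∀ x ∈ K, ∀ y : Fin n → ℝ, (∀ i, 0 ≤ y i) →
          R₀ ≤ Real.sqrt (∑ i, y i ^ 2) →
            x + y ∈ Γ ∧ (fInfty n f x).toReal - ε ≤ f (x + y)) := by
  refine ⟨fun htop B => exists_radius_of_eventually hK fun x hx => ?_,
    fun hfin ε hε => exists_radius_of_eventually hK fun x hx =>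
      eventually_toReal_fInfty_sub_le hopen hΓ hf hconc (hKsub hx) (hfin x hx) hε⟩
  have hlt : (B : EReal) < fInfty n f x := htop x hx ▸ EReal.coe_lt_top B
  exact (eventually_lt_of_lt_fInfty hopen hΓ hf (hconc.continuousOn hopen) (hKsub hx) hlt).mono
    fun _ hz => ⟨hz.1, hz.2.le⟩

/-- Lemma 2.9 (2),(3) of the paper: for a compact `K ⊆ Γ_∞`:
(i) if `f_∞ ≡ +∞` on `Γ_∞`, then for every `B > 0` there is `R₀ > 0` such that
`λ + λ̃ ∈ Γ` and `f(λ + λ̃) ≥ B` whenever `λ ∈ K` and `λ̃ ∈ Γ̄ₙ` with `|λ̃| ≥ R₀`;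
(ii) if `f_∞ < +∞` on `Γ_∞`, then for every `ε > 0` there is `R₀ > 0` such that
`λ + λ̃ ∈ Γ` and `f(λ + λ̃) ≥ f_∞(λ) − ε` whenever `λ ∈ K` and `λ̃ ∈ Γ̄ₙ` with `|λ̃| ≥ R₀`. -/
theorem stmt_6 (n : ℕ) (Γ : Set (Fin n → ℝ)) (f : (Fin n → ℝ) → ℝ)
    (hA : AssumptionA n Γ f)
    (K : Set (Fin n → ℝ)) (hKsub : K ⊆ GammaInfty n Γ) (hK : IsCompact K) :
    ((∀ x ∈ GammaInfty n Γ, fInfty n f x = ⊤) →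
      ∀ B : ℝ, 0 < B → ∃ R₀ : ℝ, 0 < R₀ ∧
        ∀ x ∈ K, ∀ y : Fin n → ℝ, (∀ i, 0 ≤ y i) →
          R₀ ≤ Real.sqrt (∑ i, y i ^ 2) → x + y ∈ Γ ∧ B ≤ f (x + y)) ∧
    ((∀ x ∈ GammaInfty n Γ, fInfty n f x ≠ ⊤) →
      ∀ ε : ℝ, 0 < ε → ∃ R₀ : ℝ, 0 < R₀ ∧
        ∀ x ∈ K, ∀ y : Fin n → ℝ, (∀ i, 0 ≤ y i) →
          R₀ ≤ Real.sqrt (∑ i, y i ^ 2) →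
            x + y ∈ Γ ∧ (fInfty n f x).toReal - ε ≤ f (x + y)) := by
  have ⟨htop, hfin⟩ :=
    stmt_6_general hA.isOpen hA.isUpperSet hA.monotoneOn hA.f_concave hKsub hK
  exact ⟨fun h B _ => htop (fun x hx => h x (hKsub hx)) B, fun h => hfin fun x hx => h x (hKsub hx)⟩
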